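/- The series Σ_{i=1,3,5,…} 1/((G+i)·i·(i+2)) over odd positive integers i converges and η := 4g · Σ_{i=1,3,5,…} 1/((G+i)·i·(i+2)) satisfies η < 0.38; in particular 0 < η < 1. -/

import Mathlib

open Real MeasureTheory Filter Set
open scoped ENNReal NNReal Classical

namespace OCF

/-- The golden ratio `G = (1+√5)/2`. -/
noncomputable def G : ℝ := (1 + Real.sqrt 5) / 2

/-- `g = (√5-1)/2`. -/
noncomputable def gg : ℝ := (Real.sqrt 5 - 1) / 2

/-- The odd Gauss map. -/
noncomputable def T (x : ℝ) : ℝ :=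
  if x = 0 then 0
  else if Odd ⌊1 / x⌋ then Int.fract (1 / x) else 1 - Int.fract (1 / x)

/-- `eps x n` is `ε_n(x)`; by convention `ε_0(x) = 1`. -/
noncomputable def eps (x : ℝ) : ℕ → ℤ
  | 0 => 1
  | n + 1 => if Odd ⌊1 / (T^[n] x)⌋ then 1 else -1

/-- `a x n` is the `n`-th odd partial quotient `a_n(x)` (for `n ≥ 1`). -/
noncomputable def a (x : ℝ) : ℕ → ℤ
  | 0 => 1
  | n + 1 => if Odd ⌊1 / (T^[n] x)⌋ then ⌊1 / (T^[n] x)⌋ else 1 + ⌊1 / (T^[n] x)⌋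

/-- `r x n = r_n(x) = a_n(x) + ε_n(x) Tⁿ(x)` for `n ≥ 1`. -/
noncomputable def r (x : ℝ) (n : ℕ) : ℝ := (a x n : ℝ) + (eps x n : ℝ) * T^[n] x

/-- The distribution functions: `H μ 0 x = μ([0,x])` and, for `n ≥ 1`,
`H μ n x = μ({y ∈ (0,1) : y irrational, 1/r_{n+1}(y) < x})`. -/
noncomputable def H (μ : Measure ℝ) : ℕ → ℝ → ℝ
  | 0 => fun x => (μ (Set.Icc 0 x)).toReal
  | n + 1 => fun x =>
      (μ {y | y ∈ Set.Ioo (0 : ℝ) 1 ∧ Irrational y ∧ 1 / r y (n + 2) < x}).toReal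

/-- `h μ n x = H_n'(x) / ((x+G-1)⁻¹ - (x-G-1)⁻¹)`, the derivative being taken within `[0,1]`. -/
noncomputable def h (μ : Measure ℝ) (n : ℕ) (x : ℝ) : ℝ :=
  derivWithin (H μ n) (Set.Icc 0 1) x / ((x + G - 1)⁻¹ - (x - G - 1)⁻¹)

/-- `η = 4g Σ_{i odd} 1/((G+i) i (i+2))`. -/
noncomputable def eta : ℝ :=
  4 * gg * ∑' m : ℕ, 1 / ((G + (2 * (m : ℝ) + 1)) * (2 * (m : ℝ) + 1) * (2 * (m : ℝ) + 3))

end OCF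

open OCF

/-!
For `-1/2 < x ≤ 4` the term `1 / ((x + i) i (i + 2))` is at most `B i - B (i + 2)`, where
`B i = 3 / (4 i (3 i + 2 x - 2))`; hence the part of the series from the odd number `i` on is at
most `B i`. Keeping the term `i = 1` and bounding the rest by `B 3`, then using `G = g + 1` and
`1 / (G + 1) = g ^ 2`, gives `η ≤ 4 g ^ 3 / 3 + g / (2 g + 9)`. The right-hand side is increasing
in `g` and below `0.38` at `g = 0.62`.
-/

namespace OCF

section Telescoping

theorem sum_range_le_of_le_sub_succ {M : Type*} [AddCommGroup M] [PartialOrder M]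
    [IsOrderedAddMonoid M] {f b : ℕ → M} (hb : ∀ n, 0 ≤ b n)
    (hfb : ∀ n, f n ≤ b n - b (n + 1)) (n : ℕ) : ∑ k ∈ Finset.range n, f k ≤ b 0 :=
  calc ∑ k ∈ Finset.range n, f k ≤ ∑ k ∈ Finset.range n, (b k - b (k + 1)) :=
        Finset.sum_le_sum fun k _ => hfb k
    _ = b 0 - b n := Finset.sum_range_sub' b n
    _ ≤ b 0 := sub_le_self _ (hb n)

variable {f b : ℕ → ℝ}

theorem summable_of_le_sub_succ (hf : ∀ n, 0 ≤ f n) (hb : ∀ n, 0 ≤ b n)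
    (hfb : ∀ n, f n ≤ b n - b (n + 1)) : Summable f :=
  summable_of_sum_range_le hf (sum_range_le_of_le_sub_succ hb hfb)

theorem tsum_nat_add_le_of_le_sub_succ (hf : ∀ n, 0 ≤ f n) (hb : ∀ n, 0 ≤ b n)
    (hfb : ∀ n, f n ≤ b n - b (n + 1)) (N : ℕ) : ∑' n, f (n + N) ≤ b N := by
  have hfb_shift (n : ℕ) : f (n + N) ≤ b (n + N) - b (n + 1 + N) := by
    simpa only [Nat.add_right_comm n 1 N] using hfb (n + N)
  simpa only [zero_add] using Real.tsum_le_of_sum_range_le (fun n => hf (n + N))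
    (sum_range_le_of_le_sub_succ (b := fun n => b (n + N)) (fun n => hb (n + N)) hfb_shift)

end Telescoping

section OddSeries

/-- The `m`-th term `1 / ((x + i) i (i + 2))`, `i = 2 m + 1`, of the series defining `η`, with the
golden ratio replaced by a real parameter `x`. -/
noncomputable def oddTerm (x : ℝ) (m : ℕ) : ℝ :=
  1 / ((x + (2 * (m : ℝ) + 1)) * (2 * (m : ℝ) + 1) * (2 * (m : ℝ) + 3))

/-- A bound for the tail `∑ 1 / ((x + j) j (j + 2))` over `j = i, i + 2, i + 4, …`. Among the
functions `1 / (4 i (i + y))` the shift `y = 2 (x - 1) / 3` makes the differences agree with the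
terms to the highest order in `1 / i`. -/
noncomputable def tailBound (x i : ℝ) : ℝ :=
  3 / (4 * i * (3 * i + 2 * x - 2))

variable {x : ℝ}

theorem tailBound_sub_tailBound_add_two {i : ℝ} (hx : -1 / 2 < x) (hi : 1 ≤ i) :
    tailBound x i - tailBound x (i + 2) = 1 / ((x + i) * i * (i + 2)) +
      (4 - x) * (x + 2) / ((x + i) * i * (i + 2) * (3 * i + 2 * x - 2) * (3 * i + 2 * x + 4)) := by
  have hxi : x + i ≠ 0 := by linarith
  have hi_ne : i ≠ 0 := by linarith
  have hi_two : i + 2 ≠ 0 := by linarith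
  have hfactor : 3 * i + 2 * x - 2 ≠ 0 := by linarith
  have hfactor_next : 3 * i + 2 * x + 4 ≠ 0 := by linarith
  have hshift : 3 * (i + 2) + 2 * x - 2 = 3 * i + 2 * x + 4 := by ring
  rw [tailBound, tailBound, hshift]
  field_simp
  ring

theorem one_div_le_tailBound_sub {i : ℝ} (hx : -1 / 2 < x) (hx_le : x ≤ 4) (hi : 1 ≤ i) :
    1 / ((x + i) * i * (i + 2)) ≤ tailBound x i - tailBound x (i + 2) := by
  have hxi : 0 < x + i := by linarith
  have hx_two : 0 < x + 2 := by linarith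
  have hfactor : 0 < 3 * i + 2 * x - 2 := by linarith
  have hfactor_next : 0 < 3 * i + 2 * x + 4 := by linarith
  rw [tailBound_sub_tailBound_add_two hx hi]
  exact le_add_of_nonneg_right (by positivity)

theorem tailBound_nonneg {i : ℝ} (hx : -1 / 2 < x) (hi : 1 ≤ i) : 0 ≤ tailBound x i := by
  have hfactor : 0 < 3 * i + 2 * x - 2 := by linarith
  unfold tailBound
  positivity

theorem oddTerm_pos (hx : -1 < x) (m : ℕ) : 0 < oddTerm x m := by
  have hxm : 0 < x + (2 * (m : ℝ) + 1) := by
    have := m.cast_nonneg (α := ℝ)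
    linarith
  unfold oddTerm
  positivity

theorem one_le_two_mul_cast_add_one (m : ℕ) : (1 : ℝ) ≤ 2 * m + 1 :=
  le_add_of_nonneg_left (by positivity)

theorem oddTerm_le_tailBound_sub (hx : -1 / 2 < x) (hx_le : x ≤ 4) (m : ℕ) :
    oddTerm x m ≤ tailBound x (2 * m + 1) - tailBound x (2 * (m + 1 : ℕ) + 1) := by
  convert one_div_le_tailBound_sub hx hx_le (one_le_two_mul_cast_add_one m) using 2
  · rw [oddTerm]
    ring_nf
  · push_cast
    ring_nf

theorem summable_oddTerm (hx : -1 / 2 < x) (hx_le : x ≤ 4) : Summable (oddTerm x) :=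
  summable_of_le_sub_succ (fun m => (oddTerm_pos (by linarith) m).le)
    (fun m => tailBound_nonneg hx (one_le_two_mul_cast_add_one m))
    (oddTerm_le_tailBound_sub hx hx_le)

theorem tsum_oddTerm_nat_add_le (hx : -1 / 2 < x) (hx_le : x ≤ 4) (N : ℕ) :
    ∑' m, oddTerm x (m + N) ≤ tailBound x (2 * N + 1) :=
  tsum_nat_add_le_of_le_sub_succ (b := fun m => tailBound x (2 * m + 1))
    (fun m => (oddTerm_pos (by linarith) m).le)
    (fun m => tailBound_nonneg hx (one_le_two_mul_cast_add_one m))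
    (oddTerm_le_tailBound_sub hx hx_le) N

theorem tsum_oddTerm_le (hx : -1 / 2 < x) (hx_le : x ≤ 4) :
    ∑' m, oddTerm x m ≤ 1 / (3 * (x + 1)) + 1 / (4 * (2 * x + 7)) := by
  have hfirst : oddTerm x 0 = 1 / (3 * (x + 1)) := by
    simp only [oddTerm, Nat.cast_zero]
    ring_nf
  have htail : tailBound x (2 * (1 : ℕ) + 1) = 1 / (4 * (2 * x + 7)) := by
    have hne : 2 * x + 7 ≠ 0 := by linarith
    rw [tailBound, Nat.cast_one, show 3 * (2 * 1 + 1) + 2 * x - 2 = 2 * x + 7 by ring]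
    field_simp
    norm_num
  rw [(summable_oddTerm hx hx_le).tsum_eq_zero_add, hfirst, ← htail]
  gcongr
  exact tsum_oddTerm_nat_add_le hx hx_le 1

end OddSeries

section GoldenRatio

theorem G_eq_goldenRatio : G = goldenRatio := rfl

theorem gg_eq_inv_goldenRatio : gg = goldenRatio⁻¹ := by
  rw [inv_goldenRatio, goldenConj, gg]
  ring

theorem G_eq_gg_add_one : G = gg + 1 := by
  unfold G gg
  ring

theorem gg_pos : 0 < gg := by
  rw [gg_eq_inv_goldenRatio]
  exact inv_pos.mpr goldenRatio_pos

theorem gg_lt_d2 : gg < 0.62 := by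
  have hsqrt : √5 < 2.24 := (Real.sqrt_lt' (by norm_num)).mpr (by norm_num)
  unfold gg
  linarith

theorem one_div_G_add_one : 1 / (G + 1) = gg ^ 2 := by
  rw [G_eq_goldenRatio, ← goldenRatio_sq, gg_eq_inv_goldenRatio, inv_pow, one_div]

theorem neg_half_lt_G : -1 / 2 < G := by
  linarith [G_eq_gg_add_one, gg_pos]

theorem G_le_four : G ≤ 4 := by
  linarith [G_eq_gg_add_one, gg_lt_d2]

end GoldenRatio

theorem eta_eq_mul_tsum_oddTerm : eta = 4 * gg * ∑' m, oddTerm G m := rfl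

theorem eta_pos : 0 < eta := by
  have hterm := oddTerm_pos (x := G) (by linarith [neg_half_lt_G])
  have hsum : 0 < ∑' m, oddTerm G m :=
    (summable_oddTerm neg_half_lt_G G_le_four).tsum_pos (fun m => (hterm m).le) 0 (hterm 0)
  have := gg_pos
  rw [eta_eq_mul_tsum_oddTerm]
  positivity

theorem eta_le_add_div : eta ≤ 4 * gg ^ 3 / 3 + gg / (2 * gg + 9) := by
  have hg := gg_pos
  calc eta = 4 * gg * ∑' m, oddTerm G m := eta_eq_mul_tsum_oddTerm
    _ ≤ 4 * gg * (1 / (3 * (G + 1)) + 1 / (4 * (2 * G + 7))) := by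
        gcongr
        exact tsum_oddTerm_le neg_half_lt_G G_le_four
    _ = 4 * gg * (1 / (G + 1) / 3 + 1 / (4 * (2 * gg + 9))) := by
        rw [div_div, mul_comm 3, show 2 * G + 7 = 2 * gg + 9 by rw [G_eq_gg_add_one]; ring]
    _ = 4 * gg ^ 3 / 3 + gg / (2 * gg + 9) := by
        rw [one_div_G_add_one]
        field_simp

theorem eta_lt_d2 : eta < 0.38 := by
  have hg := gg_pos
  have hcube : gg ^ 3 ≤ 0.62 ^ 3 := by
    gcongr
    exact gg_lt_d2.le
  have hfrac : gg / (2 * gg + 9) ≤ 0.62 / (2 * 0.62 + 9) := by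
    rw [div_le_div_iff₀ (by positivity) (by norm_num)]
    linarith [gg_lt_d2]
  calc eta ≤ 4 * gg ^ 3 / 3 + gg / (2 * gg + 9) := eta_le_add_div
    _ ≤ 4 * 0.62 ^ 3 / 3 + 0.62 / (2 * 0.62 + 9) := by gcongr
    _ < 0.38 := by norm_num

end OCF

/-- The series `Σ_{i odd} 1/((G+i) i (i+2))` converges and
`η = 4g Σ_{i odd} 1/((G+i) i (i+2)) < 0.38`; in particular `0 < η < 1`. -/
theorem ocf_eta_lt_one :
    Summable (fun m : ℕ =>
      1 / ((G + (2 * (m : ℝ) + 1)) * (2 * (m : ℝ) + 1) * (2 * (m : ℝ) + 3))) ∧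
    eta < 0.38 ∧ 0 < eta ∧ eta < 1 :=
  ⟨summable_oddTerm neg_half_lt_G G_le_four, eta_lt_d2, eta_pos, eta_lt_d2.trans (by norm_num)⟩
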